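/- Let γ > 0 and c ∈ ℝ, and let u be a twice continuously differentiable function on an open subset U of {(t,x) ∈ ℝ² : x ≠ 0, |x| − t > −1}. Then on U the following divergence identity holds: 2(1 + w_γ)² ∂_t u · (□u + c² u) = ∂_t [ (1 + w_γ)² ( (∂_t u)² + (∂_x u)² + c² u² ) ] − 2 ∂_x [ (1 + w_γ)² ∂_t u ∂_x u ] + 2 ( w̄_γ + γ w_γ (1 + |x| − t)^{−1} ) (1 + w_γ) ( (∂̃₁ u)² + c² u² ), where ∂̃₁u = (x/|x|) ∂_t u + ∂_x u. -/

import Mathlib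

open MeasureTheory

/-- The bump function `ρ(x) = exp(4/(4x²−1))` for `|x| < 1/2`, and `0` otherwise. -/
noncomputable def rho (x : ℝ) : ℝ := if |x| < 1/2 then Real.exp (4 / (4*x^2 - 1)) else 0

/-- The smooth cutoff `χ(x) = (∫_{−∞}^{x+1/2} ρ)/(∫_ℝ ρ)`. -/
noncomputable def chi (x : ℝ) : ℝ := (∫ y in Set.Iic (x + 1/2), rho y) / ∫ y, rho y

/-- Partial derivative in `t` of a function `u(t,x)`. -/
noncomputable def Dt (u : ℝ → ℝ → ℝ) : ℝ → ℝ → ℝ := fun t x => deriv (fun τ => u τ x) t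

/-- Partial derivative in `x` of a function `u(t,x)`. -/
noncomputable def Dx (u : ℝ → ℝ → ℝ) : ℝ → ℝ → ℝ := fun t x => deriv (fun y => u t y) x

/-- The Lorentz boost `L u = x ∂_t u + t ∂_x u`. -/
noncomputable def Lop (u : ℝ → ℝ → ℝ) : ℝ → ℝ → ℝ := fun t x => x * Dt u t x + t * Dx u t x

/-- The 1+1-dimensional wave operator `□u = ∂_t∂_t u − ∂_x∂_x u`. -/
noncomputable def Box (u : ℝ → ℝ → ℝ) : ℝ → ℝ → ℝ := fun t x => Dt (Dt u) t x - Dx (Dx u) t x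

/-- The null derivative `∂̃₁ u = (x/|x|) ∂_t u + ∂_x u` (for `x ≠ 0`). -/
noncomputable def Nd (u : ℝ → ℝ → ℝ) : ℝ → ℝ → ℝ := fun t x => (x/|x|) * Dt u t x + Dx u t x

/-- The weight `w_γ(t,x) = χ(|x|−t)·(|x|−t+1)^γ`. -/
noncomputable def wgam (γ t x : ℝ) : ℝ := chi (|x| - t) * (|x| - t + 1) ^ γ

/-- The auxiliary weight `w̄_γ(t,x) = χ′(|x|−t)·(|x|−t+1)^γ`. -/
noncomputable def wbar (γ t x : ℝ) : ℝ := deriv chi (|x| - t) * (|x| - t + 1) ^ γ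

/-!
Multiplying `□u + m u` by `2 Q ∂_t u` and moving the derivatives off `u` leaves the error
`-∂_t Q ((∂_t u)² + (∂_x u)² + m u²) + 2 ∂_x Q ∂_t u ∂_x u`. If `Q = φ(|x| - t)` depends only on the
distance to the light cone, then `∂_x Q = -(x/|x|) ∂_t Q = (x/|x|) φ'(|x| - t)`, and since
`(x/|x|)² = 1` the mixed term completes the square: the error is
`φ'(|x| - t) ((∂̃₁u)² + m u²)`. Take `φ(s) = (1 + χ(s) (s + 1)^γ)²` and `m = c²`.
-/

open Function
open scoped Topology

section Cutoff

lemma hasDerivAt_integral_Iic {E : Type*} [NormedAddCommGroup E] [NormedSpace ℝ E]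
    [CompleteSpace E] {f : ℝ → E} {b : ℝ} (hf : Integrable f) (hb : ContinuousAt f b) :
    HasDerivAt (fun a ↦ ∫ y in Set.Iic a, f y) (f b) b := by
  have hsplit (a : ℝ) :
      ∫ y in Set.Iic a, f y = (∫ y in Set.Iic b, f y) + ∫ y in b..a, f y := by
    rw [← intervalIntegral.integral_Iic_sub_Iic hf.integrableOn hf.integrableOn,
      add_sub_cancel]
  rw [funext hsplit]
  exact (intervalIntegral.integral_hasDerivAt_right hf.intervalIntegrable
    hf.aestronglyMeasurable.stronglyMeasurableAtFilter hb).const_add _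

lemma rho_eq_expNegInvGlue (x : ℝ) : rho x = expNegInvGlue (1 / 4 - x ^ 2) := by
  have hsupp : |x| < 1 / 2 ↔ 0 < 1 / 4 - x ^ 2 := by
    rw [← abs_of_pos (one_half_pos (α := ℝ)), ← sq_lt_sq, sub_pos]
    norm_num
  by_cases hx : |x| < 1 / 2
  · have hpos := hsupp.1 hx
    have hneg : 4 * x ^ 2 - 1 ≠ 0 := by linarith
    rw [rho, if_pos hx, expNegInvGlue, if_neg hpos.not_ge]
    congr 1
    rw [← one_div, ← neg_div, div_eq_div_iff hneg hpos.ne']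
    ring
  · rw [rho, if_neg hx, expNegInvGlue.zero_of_nonpos (not_lt.1 (mt hsupp.2 hx))]

lemma continuous_rho : Continuous rho := by
  rw [funext rho_eq_expNegInvGlue]
  exact (expNegInvGlue.contDiff (n := 0)).continuous.comp (by fun_prop)

lemma hasCompactSupport_rho : HasCompactSupport rho :=
  HasCompactSupport.intro (isCompact_Icc (a := -(1 / 2)) (b := 1 / 2)) fun _ hx ↦
    if_neg fun h ↦ hx (abs_le.1 h.le)

lemma differentiable_chi : Differentiable ℝ chi := fun x ↦
  have hint := continuous_rho.integrable_of_hasCompactSupport hasCompactSupport_rho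
  ((hasDerivAt_integral_Iic hint continuous_rho.continuousAt).comp_add_const x (1 / 2)
    |>.div_const _).differentiableAt

end Cutoff

section PartialDerivatives

lemma hasFDerivAt_fderiv_apply {𝕜 E F : Type*} [NontriviallyNormedField 𝕜]
    [NormedAddCommGroup E] [NormedSpace 𝕜 E] [NormedAddCommGroup F] [NormedSpace 𝕜 F]
    {f : E → F} {a : E} (hf : ContDiffAt 𝕜 2 f a) (v : E) :
    HasFDerivAt (fun b ↦ fderiv 𝕜 f b v) ((fderiv 𝕜 (fderiv 𝕜 f) a).flip v) a := by
  have hf' : DifferentiableAt 𝕜 (fderiv 𝕜 f) a :=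
    (hf.fderiv_right (m := 1) (by norm_num)).differentiableAt one_ne_zero
  simpa using hf'.hasFDerivAt.clm_apply (hasFDerivAt_const v a)

variable {u : ℝ → ℝ → ℝ} {t x : ℝ}

lemma hasDerivAt_fderiv_left (hu : DifferentiableAt ℝ (uncurry u) (t, x)) :
    HasDerivAt (fun τ ↦ u τ x) (fderiv ℝ (uncurry u) (t, x) (1, 0)) t :=
  hu.hasFDerivAt.comp_hasDerivAt (f := fun τ ↦ (τ, x)) t
    ((hasDerivAt_id t).prodMk (hasDerivAt_const t x))

lemma hasDerivAt_fderiv_right (hu : DifferentiableAt ℝ (uncurry u) (t, x)) :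
    HasDerivAt (fun y ↦ u t y) (fderiv ℝ (uncurry u) (t, x) (0, 1)) x :=
  hu.hasFDerivAt.comp_hasDerivAt (f := fun y ↦ (t, y)) x
    ((hasDerivAt_const x t).prodMk (hasDerivAt_id x))

lemma hasDerivAt_Dt (hu : DifferentiableAt ℝ (uncurry u) (t, x)) :
    HasDerivAt (fun τ ↦ u τ x) (Dt u t x) t :=
  (hasDerivAt_fderiv_left hu).differentiableAt.hasDerivAt

lemma hasDerivAt_Dx (hu : DifferentiableAt ℝ (uncurry u) (t, x)) :
    HasDerivAt (fun y ↦ u t y) (Dx u t x) x :=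
  (hasDerivAt_fderiv_right hu).differentiableAt.hasDerivAt

variable {p : ℝ × ℝ}

lemma uncurry_Dt_eventuallyEq (hu : ContDiffAt ℝ 1 (uncurry u) p) :
    uncurry (Dt u) =ᶠ[𝓝 p] fun q ↦ fderiv ℝ (uncurry u) q (1, 0) := by
  filter_upwards [hu.eventually (by simp)] with q hq
  exact (hasDerivAt_fderiv_left (hq.differentiableAt one_ne_zero)).deriv

lemma uncurry_Dx_eventuallyEq (hu : ContDiffAt ℝ 1 (uncurry u) p) :
    uncurry (Dx u) =ᶠ[𝓝 p] fun q ↦ fderiv ℝ (uncurry u) q (0, 1) := by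
  filter_upwards [hu.eventually (by simp)] with q hq
  exact (hasDerivAt_fderiv_right (hq.differentiableAt one_ne_zero)).deriv

lemma hasFDerivAt_uncurry_Dt (hu : ContDiffAt ℝ 2 (uncurry u) p) :
    HasFDerivAt (uncurry (Dt u)) ((fderiv ℝ (fderiv ℝ (uncurry u)) p).flip (1, 0)) p :=
  (hasFDerivAt_fderiv_apply hu (1, 0)).congr_of_eventuallyEq
    (uncurry_Dt_eventuallyEq (hu.of_le one_le_two))

lemma hasFDerivAt_uncurry_Dx (hu : ContDiffAt ℝ 2 (uncurry u) p) :
    HasFDerivAt (uncurry (Dx u)) ((fderiv ℝ (fderiv ℝ (uncurry u)) p).flip (0, 1)) p :=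
  (hasFDerivAt_fderiv_apply hu (0, 1)).congr_of_eventuallyEq
    (uncurry_Dx_eventuallyEq (hu.of_le one_le_two))

lemma Dt_Dx_comm (hu : ContDiffAt ℝ 2 (uncurry u) (t, x)) :
    Dt (Dx u) t x = Dx (Dt u) t x := by
  have hDt := hasFDerivAt_uncurry_Dt hu
  have hDx := hasFDerivAt_uncurry_Dx hu
  calc Dt (Dx u) t x
      = fderiv ℝ (fderiv ℝ (uncurry u)) (t, x) (1, 0) (0, 1) := by
        rw [Dt, (hasDerivAt_fderiv_left hDx.differentiableAt).deriv, hDx.fderiv]; rfl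
    _ = fderiv ℝ (fderiv ℝ (uncurry u)) (t, x) (0, 1) (1, 0) :=
        hu.isSymmSndFDerivAt (by simp) (1, 0) (0, 1)
    _ = Dx (Dt u) t x := by
        rw [Dx, (hasDerivAt_fderiv_right hDt.differentiableAt).deriv, hDt.fderiv]; rfl

end PartialDerivatives

section Multiplier

variable {u : ℝ → ℝ → ℝ} {t x : ℝ}

lemma wave_multiplier_identity (m : ℝ) {Q : ℝ → ℝ → ℝ} {Qt Qx : ℝ}
    (hu : ContDiffAt ℝ 2 (uncurry u) (t, x))
    (hQt : HasDerivAt (fun τ ↦ Q τ x) Qt t) (hQx : HasDerivAt (fun y ↦ Q t y) Qx x) :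
    2 * Q t x * Dt u t x * (Box u t x + m * u t x) =
      Dt (fun t x ↦ Q t x * (Dt u t x ^ 2 + Dx u t x ^ 2 + m * u t x ^ 2)) t x
      - 2 * Dx (fun t x ↦ Q t x * Dt u t x * Dx u t x) t x
      - Qt * (Dt u t x ^ 2 + Dx u t x ^ 2 + m * u t x ^ 2)
      + 2 * Qx * Dt u t x * Dx u t x := by
  have hDt := (hasFDerivAt_uncurry_Dt hu).differentiableAt
  have hDx := (hasFDerivAt_uncurry_Dx hu).differentiableAt
  have hut := hasDerivAt_Dt (hu.differentiableAt two_ne_zero)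
  have henergy :
      Dt (fun t x ↦ Q t x * (Dt u t x ^ 2 + Dx u t x ^ 2 + m * u t x ^ 2)) t x =
        Qt * (Dt u t x ^ 2 + Dx u t x ^ 2 + m * u t x ^ 2) +
          Q t x * (2 * Dt u t x * Dt (Dt u) t x + 2 * Dx u t x * Dt (Dx u) t x
            + m * (2 * u t x * Dt u t x)) :=
    ((hQt.fun_mul ((((hasDerivAt_Dt hDt).fun_pow 2).fun_add ((hasDerivAt_Dt hDx).fun_pow 2)).fun_add
      ((hut.fun_pow 2).const_mul m))).congr_deriv (by push_cast; ring)).deriv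
  have hflux :
      Dx (fun t x ↦ Q t x * Dt u t x * Dx u t x) t x =
        (Qx * Dt u t x + Q t x * Dx (Dt u) t x) * Dx u t x +
          Q t x * Dt u t x * Dx (Dx u) t x :=
    ((hQx.fun_mul (hasDerivAt_Dx hDt)).fun_mul (hasDerivAt_Dx hDx)).deriv
  rw [henergy, hflux, Dt_Dx_comm hu, Box]
  ring

lemma hasDerivAt_abs_div_abs (hx : x ≠ 0) : HasDerivAt (fun y : ℝ ↦ |y|) (x / |x|) x := by
  have hsign : (SignType.sign x : ℝ) = x / |x| :=
    eq_div_of_mul_eq (abs_ne_zero.2 hx) (sign_mul_abs x)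
  exact hsign ▸ hasDerivAt_abs hx

lemma wave_multiplier_identity_comp_abs_sub (m : ℝ) {φ : ℝ → ℝ} {φ' : ℝ} (hx : x ≠ 0)
    (hu : ContDiffAt ℝ 2 (uncurry u) (t, x)) (hφ : HasDerivAt φ φ' (|x| - t)) :
    2 * φ (|x| - t) * Dt u t x * (Box u t x + m * u t x) =
      Dt (fun t x ↦ φ (|x| - t) * (Dt u t x ^ 2 + Dx u t x ^ 2 + m * u t x ^ 2)) t x
      - 2 * Dx (fun t x ↦ φ (|x| - t) * Dt u t x * Dx u t x) t x
      + φ' * (Nd u t x ^ 2 + m * u t x ^ 2) := by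
  have hQt : HasDerivAt (fun τ ↦ φ (|x| - τ)) (φ' * -1) t :=
    hφ.comp t ((hasDerivAt_id t).const_sub |x|)
  have hQx : HasDerivAt (fun y ↦ φ (|y| - t)) (φ' * (x / |x|)) x :=
    hφ.comp x ((hasDerivAt_abs_div_abs hx).sub_const t)
  have hsq : (x / |x|) ^ 2 = 1 := by rw [div_pow, sq_abs, div_self (pow_ne_zero 2 hx)]
  rw [wave_multiplier_identity m (Q := fun t x ↦ φ (|x| - t)) hu hQt hQx, Nd]
  linear_combination -φ' * Dt u t x ^ 2 * hsq

end Multiplier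

lemma hasDerivAt_mul_add_const_rpow {g : ℝ → ℝ} {g' s a : ℝ} (γ : ℝ) (hs : s + a ≠ 0)
    (hg : HasDerivAt g g' s) :
    HasDerivAt (fun r ↦ g r * (r + a) ^ γ)
      (g' * (s + a) ^ γ + γ * (g s * (s + a) ^ γ) * (s + a)⁻¹) s := by
  have hpow := ((hasDerivAt_id s).add_const a).rpow_const (p := γ) (Or.inl hs)
  refine (hg.fun_mul hpow).congr_deriv ?_
  simp only [id, Real.rpow_sub_one hs]
  ring

theorem stmt15_general (γ m : ℝ) {u : ℝ → ℝ → ℝ} {t x : ℝ} (hx : x ≠ 0) (hs : -1 < |x| - t)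
    (hu : ContDiffAt ℝ 2 (uncurry u) (t, x)) :
    2 * (1 + wgam γ t x) ^ 2 * Dt u t x * (Box u t x + m * u t x) =
      Dt (fun t x ↦ (1 + wgam γ t x) ^ 2 * (Dt u t x ^ 2 + Dx u t x ^ 2 + m * u t x ^ 2)) t x
      - 2 * Dx (fun t x ↦ (1 + wgam γ t x) ^ 2 * Dt u t x * Dx u t x) t x
      + 2 * (wbar γ t x + γ * wgam γ t x * (1 + |x| - t)⁻¹) * (1 + wgam γ t x)
        * (Nd u t x ^ 2 + m * u t x ^ 2) := by
  have hφ : HasDerivAt (fun s ↦ (1 + chi s * (s + 1) ^ γ) ^ 2)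
      (2 * (wbar γ t x + γ * wgam γ t x * (1 + |x| - t)⁻¹) * (1 + wgam γ t x)) (|x| - t) := by
    have hpos : |x| - t + 1 ≠ 0 := by linarith
    have hprofile := hasDerivAt_mul_add_const_rpow γ hpos (differentiable_chi _).hasDerivAt
    refine ((hprofile.const_add 1).fun_pow 2).congr_deriv ?_
    rw [wbar, wgam, show 1 + |x| - t = |x| - t + 1 by ring]
    push_cast
    ring
  exact wave_multiplier_identity_comp_abs_sub m hx hu hφ

/-- the weighted divergence identity
`2(1+w_γ)²∂_t u·(□u + c²u) = ∂_t[(1+w_γ)²((∂_t u)² + (∂_x u)² + c²u²)]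
 − 2∂_x[(1+w_γ)²∂_t u ∂_x u] + 2(w̄_γ + γw_γ(1+|x|−t)⁻¹)(1+w_γ)((∂̃₁u)² + c²u²)`
on an open subset of `{x ≠ 0, |x|−t > −1}`. -/
theorem stmt15 (γ c : ℝ) (hγ : 0 < γ) (u : ℝ → ℝ → ℝ) (U : Set (ℝ × ℝ)) (hU : IsOpen U)
    (hUsub : U ⊆ {p : ℝ × ℝ | p.2 ≠ 0 ∧ -1 < |p.2| - p.1})
    (hu : ContDiffOn ℝ 2 (fun p : ℝ × ℝ => u p.1 p.2) U) :
    ∀ p ∈ U,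
      2 * (1 + wgam γ p.1 p.2)^2 * Dt u p.1 p.2 * (Box u p.1 p.2 + c^2 * u p.1 p.2) =
        Dt (fun t x => (1 + wgam γ t x)^2 *
            ((Dt u t x)^2 + (Dx u t x)^2 + c^2 * (u t x)^2)) p.1 p.2
        - 2 * Dx (fun t x => (1 + wgam γ t x)^2 * Dt u t x * Dx u t x) p.1 p.2
        + 2 * (wbar γ p.1 p.2 + γ * wgam γ p.1 p.2 * (1 + |p.2| - p.1)⁻¹)
            * (1 + wgam γ p.1 p.2) * ((Nd u p.1 p.2)^2 + c^2 * (u p.1 p.2)^2) := by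
  intro p hp
  exact stmt15_general γ (c ^ 2) (hUsub hp).1 (hUsub hp).2 (hu.contDiffAt (hU.mem_nhds hp))
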